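/- Let each f_i : R^d → R be differentiable with L_i-Lipschitz gradient. Let S be a proper sampling over [n] with probability vector p, let v ∈ R^n satisfy the ESO condition for S, and set b = Σ_i p_i and K = (b/n²) Σ_{i=1}^n v_i L_i²/p_i. Then for any point x ∈ R^d and any points α_1,…,α_n ∈ R^d, the SAGA stochastic gradient estimator w := Σ_{i∈S} (∇f_i(x) − ∇f_i(α_i))/(n p_i) + (1/n) Σ_{j=1}^n ∇f_j(α_j) satisfies E‖w‖² ≤ 2‖∇f(x)‖² + (2K/b)·max_{i∈[n]} ‖x − α_i‖², where f = (1/n) Σ_i f_i and the expectation is over the random set S. -/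

import Mathlib

open scoped BigOperators

/-!
The estimator is unbiased, so its second moment is `‖∇f(x)‖²` plus its variance. The variance of
`∑_{i ∈ S} uᵢ` is `∑ᵢⱼ (Pᵢⱼ - pᵢ pⱼ) ⟪uᵢ, uⱼ⟫`, and since the Gram matrix of `u` is positive
semidefinite, the ESO condition bounds it by `∑ᵢ pᵢ vᵢ ‖uᵢ‖²` (Schur product theorem). For
`uᵢ = (∇fᵢ(x) - ∇fᵢ(αᵢ)) / (n pᵢ)` the Lipschitz bounds turn this into `(K / b) max ‖x - αᵢ‖²`.
Splitting off the mean exactly, rather than by `‖a + b‖² ≤ 2‖a‖² + 2‖b‖²`, gives the estimate with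
both factors `2` replaced by `1`.
-/

section Moments

open scoped RealInnerProductSpace

variable {ι E : Type*} [NormedAddCommGroup E] [InnerProductSpace ℝ E]

lemma norm_sq_sum_eq_sum_sum_inner (s : Finset ι) (u : ι → E) :
    ‖∑ i ∈ s, u i‖ ^ 2 = ∑ i ∈ s, ∑ j ∈ s, ⟪u i, u j⟫ := by
  rw [← real_inner_self_eq_norm_sq, sum_inner]
  simp only [inner_sum]

variable [Fintype ι]

lemma weighted_variance_add_const {w : ι → ℝ} (hw : ∑ i, w i = 1) (X : ι → E) (c : E) :
    ∑ i, w i * ‖X i + c‖ ^ 2 - ‖∑ i, w i • (X i + c)‖ ^ 2 =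
      ∑ i, w i * ‖X i‖ ^ 2 - ‖∑ i, w i • X i‖ ^ 2 := by
  have hmean : ∑ i, w i • (X i + c) = ∑ i, w i • X i + c := by
    simp only [smul_add, Finset.sum_add_distrib, ← Finset.sum_smul, hw, one_smul]
  have hcross : ∑ i, w i * (2 * ⟪X i, c⟫) = 2 * ⟪∑ i, w i • X i, c⟫ := by
    simp only [sum_inner, real_inner_smul_left, Finset.mul_sum, mul_left_comm]
  simp only [hmean, norm_add_sq_real, mul_add, Finset.sum_add_distrib, ← Finset.sum_mul,
    hw, hcross]
  ring

lemma sum_mul_inner_nonneg_of_posSemidef {A : Matrix ι ι ℝ} (hA : A.PosSemidef) (u : ι → E) :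
    0 ≤ ∑ i, ∑ j, A i j * ⟪u i, u j⟫ := by
  simpa [dotProduct, Matrix.mulVec, Matrix.gram_apply] using
    (hA.hadamard (Matrix.posSemidef_gram ℝ u)).dotProduct_mulVec_nonneg 1

end Moments

section Sampling

open scoped RealInnerProductSpace

variable {ι E : Type*} [Fintype ι] [DecidableEq ι]

/-- The probability vector `pᵢ = Prob(i ∈ S)` of the sampling `S` with law `w`. A sampling is
encoded by its law, a point of the standard simplex on `Finset ι`. -/
def inclusionProb (w : Finset ι → ℝ) (i : ι) : ℝ :=
  ∑ S with i ∈ S, w S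

/-- The probability matrix `Pᵢⱼ = Prob({i, j} ⊆ S)` of the sampling `S` with law `w`. -/
def pairInclusionProb (w : Finset ι → ℝ) : Matrix ι ι ℝ :=
  Matrix.of fun i j => ∑ S with i ∈ S ∧ j ∈ S, w S

/-- The expected separable overapproximation (ESO) condition `P - p pᵀ ⪯ Diag(p₁ v₁, …, pₙ vₙ)`,
under which the variance of a sum over the sampling is controlled by a separable quadratic form. -/
def SatisfiesESO (w : Finset ι → ℝ) (v : ι → ℝ) : Prop :=
  (Matrix.diagonal (fun i => inclusionProb w i * v i) -
    (pairInclusionProb w -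
      Matrix.of fun i j => inclusionProb w i * inclusionProb w j)).PosSemidef

variable {w : Finset ι → ℝ} {v : ι → ℝ}

lemma inclusionProb_le_one (hw : w ∈ stdSimplex ℝ (Finset ι)) (i : ι) :
    inclusionProb w i ≤ 1 :=
  hw.2 ▸ Finset.sum_le_univ_sum_of_nonneg hw.1

lemma pairInclusionProb_self (w : Finset ι → ℝ) (i : ι) :
    pairInclusionProb w i i = inclusionProb w i := by
  simp only [pairInclusionProb, inclusionProb, Matrix.of_apply, and_self]

lemma SatisfiesESO.one_sub_inclusionProb_le (h : SatisfiesESO w v) {i : ι}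
    (hi : 0 < inclusionProb w i) : 1 - inclusionProb w i ≤ v i := by
  have hdiag := h.diag_nonneg (i := i)
  simp only [Matrix.sub_apply, Matrix.diagonal_apply_eq, Matrix.of_apply,
    pairInclusionProb_self] at hdiag
  exact le_of_mul_le_mul_left (by linarith) hi

lemma SatisfiesESO.nonneg (h : SatisfiesESO w v) (hw : w ∈ stdSimplex ℝ (Finset ι)) {i : ι}
    (hi : 0 < inclusionProb w i) : 0 ≤ v i :=
  (sub_nonneg.mpr (inclusionProb_le_one hw i)).trans (h.one_sub_inclusionProb_le hi)

lemma sum_smul_sum_mem_eq_sum_inclusionProb_smul [AddCommGroup E] [Module ℝ E]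
    (w : Finset ι → ℝ) (u : ι → E) :
    ∑ S, w S • ∑ i ∈ S, u i = ∑ i, inclusionProb w i • u i := by
  simp only [Finset.smul_sum, inclusionProb, Finset.sum_smul]
  exact Finset.sum_comm' (by simp)

variable [NormedAddCommGroup E] [InnerProductSpace ℝ E]

lemma sum_mul_norm_sq_sum_mem_eq_sum_pairInclusionProb_mul (w : Finset ι → ℝ) (u : ι → E) :
    ∑ S, w S * ‖∑ i ∈ S, u i‖ ^ 2 = ∑ i, ∑ j, pairInclusionProb w i j * ⟪u i, u j⟫ := by
  simp only [norm_sq_sum_eq_sum_sum_inner, ← Finset.sum_product', Finset.mul_sum,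
    pairInclusionProb, Matrix.of_apply, Finset.sum_mul]
  refine Finset.sum_comm' fun S ij => ?_
  simp only [Finset.mem_product, Finset.mem_filter, Finset.mem_univ, true_and, and_true]

lemma SatisfiesESO.variance_sum_mem_le (h : SatisfiesESO w v) (u : ι → E) :
    ∑ S, w S * ‖∑ i ∈ S, u i‖ ^ 2 - ‖∑ i, inclusionProb w i • u i‖ ^ 2 ≤
      ∑ i, inclusionProb w i * v i * ‖u i‖ ^ 2 := by
  have hmean : ‖∑ i, inclusionProb w i • u i‖ ^ 2 =
      ∑ i, ∑ j, inclusionProb w i * inclusionProb w j * ⟪u i, u j⟫ := by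
    simp only [norm_sq_sum_eq_sum_sum_inner, real_inner_smul_left, real_inner_smul_right,
      mul_assoc, mul_left_comm]
  have hquad := sum_mul_inner_nonneg_of_posSemidef h u
  simp only [Matrix.sub_apply, Matrix.of_apply, Matrix.diagonal_apply, sub_mul, ite_mul, zero_mul,
    Finset.sum_sub_distrib, Finset.sum_ite_eq, Finset.mem_univ, if_true,
    real_inner_self_eq_norm_sq] at hquad
  rw [sum_mul_norm_sq_sum_mem_eq_sum_pairInclusionProb_mul, hmean]
  linarith

lemma SatisfiesESO.second_moment_sum_mem_add_le (h : SatisfiesESO w v) (hw : ∑ S, w S = 1)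
    (u : ι → E) (c : E) :
    ∑ S, w S * ‖∑ i ∈ S, u i + c‖ ^ 2 ≤
      ‖∑ S, w S • (∑ i ∈ S, u i + c)‖ ^ 2 + ∑ i, inclusionProb w i * v i * ‖u i‖ ^ 2 := by
  rw [← sub_le_iff_le_add', weighted_variance_add_const hw,
    sum_smul_sum_mem_eq_sum_inclusionProb_smul]
  exact h.variance_sum_mem_le u

end Sampling

section Saga

variable {ι E : Type*} [Fintype ι]

/-- The SAGA estimator of the mean of `g` from the coordinates in `S`, with the table `h` as control
variate. In SAGA, `g i = ∇fᵢ(x)` and `h i = ∇fᵢ(αᵢ)`. -/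
noncomputable def sagaEstimator [AddCommGroup E] [Module ℝ E] (p : ι → ℝ) (g h : ι → E)
    (S : Finset ι) : E :=
  ∑ i ∈ S, ((Fintype.card ι : ℝ) * p i)⁻¹ • (g i - h i) + (Fintype.card ι : ℝ)⁻¹ • ∑ j, h j

lemma sum_smul_sagaEstimator_eq_mean [DecidableEq ι] [AddCommGroup E] [Module ℝ E]
    {w : Finset ι → ℝ} (hw : ∑ S, w S = 1) (hp : ∀ i, inclusionProb w i ≠ 0) (g h : ι → E) :
    ∑ S, w S • sagaEstimator (inclusionProb w) g h S = (Fintype.card ι : ℝ)⁻¹ • ∑ i, g i := by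
  have hweight (i : ι) : inclusionProb w i * ((Fintype.card ι : ℝ) * inclusionProb w i)⁻¹ =
      (Fintype.card ι : ℝ)⁻¹ := by
    rw [mul_inv_rev, mul_inv_cancel_left₀ (hp i)]
  simp only [sagaEstimator, smul_add, Finset.sum_add_distrib, ← Finset.sum_smul, hw, one_smul,
    sum_smul_sum_mem_eq_sum_inclusionProb_smul]
  simp only [smul_smul, hweight, ← Finset.smul_sum, ← smul_add, Finset.sum_sub_distrib,
    sub_add_cancel]

variable [NormedAddCommGroup E] [InnerProductSpace ℝ E]

lemma SatisfiesESO.sagaEstimator_second_moment_le [DecidableEq ι] {w : Finset ι → ℝ} {v : ι → ℝ}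
    (hESO : SatisfiesESO w v) (hw : ∑ S, w S = 1) (hp : ∀ i, inclusionProb w i ≠ 0)
    (g h : ι → E) :
    ∑ S, w S * ‖sagaEstimator (inclusionProb w) g h S‖ ^ 2 ≤
      ‖(Fintype.card ι : ℝ)⁻¹ • ∑ i, g i‖ ^ 2 +
        ((Fintype.card ι : ℝ) ^ 2)⁻¹ * ∑ i, v i / inclusionProb w i * ‖g i - h i‖ ^ 2 := by
  rw [← sum_smul_sagaEstimator_eq_mean hw hp g h]
  refine (hESO.second_moment_sum_mem_add_le hw _ _).trans_eq ?_
  rw [Finset.mul_sum]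
  congr 1
  refine Finset.sum_congr rfl fun i _ => ?_
  have := hp i
  rw [norm_smul, mul_pow, Real.norm_eq_abs, sq_abs]
  field_simp

lemma hasGradientAt_const_mul_sum [CompleteSpace E] {f : ι → E → ℝ} {x : E}
    (hf : ∀ i, DifferentiableAt ℝ (f i) x) (c : ℝ) :
    HasGradientAt (fun y => c * ∑ i, f i y) (c • ∑ i, gradient (f i) x) x := by
  rw [hasGradientAt_iff_hasFDerivAt, map_smul, map_sum]
  exact (HasFDerivAt.fun_sum fun i _ => (hf i).hasGradientAt.hasFDerivAt).const_mul c

theorem saga_estimator_second_moment_bound_general [Nonempty ι] [DecidableEq ι] [CompleteSpace E]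
    {f : ι → E → ℝ} (hdiff : ∀ i, Differentiable ℝ (f i)) {L : ι → ℝ} {x : E} {α : ι → E}
    (hlip : ∀ i, ‖gradient (f i) x - gradient (f i) (α i)‖ ≤ L i * ‖x - α i‖)
    {w : Finset ι → ℝ} (hw : w ∈ stdSimplex ℝ (Finset ι)) (hproper : ∀ i, 0 < inclusionProb w i)
    {v : ι → ℝ} (hESO : SatisfiesESO w v) {b K : ℝ} (hb : b = ∑ i, inclusionProb w i)
    (hK : K = b / (Fintype.card ι : ℝ) ^ 2 * ∑ i, v i * L i ^ 2 / inclusionProb w i) :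
    ∑ S, w S * ‖sagaEstimator (inclusionProb w) (fun i => gradient (f i) x)
        (fun i => gradient (f i) (α i)) S‖ ^ 2 ≤
      ‖gradient (fun y => (Fintype.card ι : ℝ)⁻¹ * ∑ i, f i y) x‖ ^ 2 +
        K / b * Finset.univ.sup' Finset.univ_nonempty (fun i => ‖x - α i‖ ^ 2) := by
  set M := Finset.univ.sup' Finset.univ_nonempty fun i => ‖x - α i‖ ^ 2
  have hb_pos : 0 < b := hb ▸ Finset.sum_pos (fun i _ => hproper i) Finset.univ_nonempty
  have hgrad (i : ι) : ‖gradient (f i) x - gradient (f i) (α i)‖ ^ 2 ≤ L i ^ 2 * M := calc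
    _ ≤ (L i * ‖x - α i‖) ^ 2 := by gcongr; exact hlip i
    _ = L i ^ 2 * ‖x - α i‖ ^ 2 := mul_pow ..
    _ ≤ L i ^ 2 * M := by
      gcongr; exact Finset.le_sup' (fun i => ‖x - α i‖ ^ 2) (Finset.mem_univ i)
  rw [(hasGradientAt_const_mul_sum (fun i => hdiff i x) _).gradient]
  refine (hESO.sagaEstimator_second_moment_le hw.2 (fun i => (hproper i).ne') _ _).trans ?_
  refine (add_le_add_iff_left _).mpr ?_
  calc
    _ ≤ ((Fintype.card ι : ℝ) ^ 2)⁻¹ * ∑ i, v i / inclusionProb w i * (L i ^ 2 * M) := by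
      gcongr with i
      · exact div_nonneg (hESO.nonneg hw (hproper i)) (hproper i).le
      · exact hgrad i
    _ = ((Fintype.card ι : ℝ) ^ 2)⁻¹ * (∑ i, v i * L i ^ 2 / inclusionProb w i) * M := by
      simp only [mul_assoc, Finset.sum_mul, div_mul_eq_mul_div]
    _ = K / b * M := by rw [hK]; field_simp

end Saga

/-- Variance bound for the minibatch SAGA gradient estimator under arbitrary
sampling: `E‖w‖² ≤ 2‖∇f(x)‖² + (2K/b)·max_i ‖x - α i‖²`. -/
theorem saga_estimator_second_moment_bound {n d : ℕ} (hn : 0 < n)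
    (f : Fin n → EuclideanSpace ℝ (Fin d) → ℝ)
    (L : Fin n → ℝ) (hL : ∀ i, 0 ≤ L i)
    (hdiff : ∀ i, Differentiable ℝ (f i))
    (hlip : ∀ i x y, ‖gradient (f i) x - gradient (f i) y‖ ≤ L i * ‖x - y‖)
    (F : EuclideanSpace ℝ (Fin d) → ℝ)
    (hF : F = fun y => (n : ℝ)⁻¹ * ∑ i, f i y)
    (w : Finset (Fin n) → ℝ) (hw0 : ∀ S, 0 ≤ w S) (hw1 : ∑ S, w S = 1)
    (p : Fin n → ℝ)
    (hp : ∀ i, p i = ∑ S ∈ Finset.univ.filter (fun S : Finset (Fin n) => i ∈ S), w S)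
    (hproper : ∀ i, 0 < p i)
    (P : Matrix (Fin n) (Fin n) ℝ)
    (hP : ∀ i j, P i j =
      ∑ S ∈ Finset.univ.filter (fun S : Finset (Fin n) => i ∈ S ∧ j ∈ S), w S)
    (v : Fin n → ℝ)
    (hESO : (Matrix.diagonal (fun i => p i * v i) -
      (P - Matrix.of fun i j => p i * p j)).PosSemidef)
    (b K : ℝ) (hb : b = ∑ i, p i)
    (hK : K = b / (n : ℝ) ^ 2 * ∑ i, v i * L i ^ 2 / p i)
    (x : EuclideanSpace ℝ (Fin d)) (α : Fin n → EuclideanSpace ℝ (Fin d)) :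
    ∑ S : Finset (Fin n), w S *
        ‖(∑ i ∈ S, ((n : ℝ) * p i)⁻¹ • (gradient (f i) x - gradient (f i) (α i))) +
            (n : ℝ)⁻¹ • ∑ j, gradient (f j) (α j)‖ ^ 2
      ≤ 2 * ‖gradient F x‖ ^ 2 +
        (2 * K / b) * Finset.univ.sup' ⟨⟨0, hn⟩, Finset.mem_univ _⟩
          (fun i => ‖x - α i‖ ^ 2) := by
  obtain ⟨rfl, rfl⟩ : p = inclusionProb w ∧ P = pairInclusionProb w := ⟨funext hp, Matrix.ext hP⟩
  have := Fin.pos_iff_nonempty.mp hn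
  have hbound := saga_estimator_second_moment_bound_general hdiff (fun i => hlip i x (α i))
    ⟨hw0, hw1⟩ hproper hESO hb (K := K) (by rwa [Fintype.card_fin])
  simp only [sagaEstimator, Fintype.card_fin, ← hF] at hbound
  have hnonneg := (Finset.sum_nonneg fun S _ => mul_nonneg (hw0 S) (sq_nonneg _)).trans hbound
  rw [mul_div_assoc]
  linarith
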